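/- Let R be a commutative noetherian ring and M a nonzero Gorenstein injective R-module. Then sup { depth R_p − width_{R_p} M_p | p ∈ Spec(R) } = 0. -/

import Mathlib

open CategoryTheory

universe u

/-- The depth of a module `N` over a commutative noetherian local ring `S`,
`inf { i | Ext^i_S(k, N) ≠ 0 }`, as an element of the extended (integer) line,
with `inf ∅ = ⊤`. -/
noncomputable def moduleDepth (S : Type u) [CommRing S] [IsLocalRing S]
    (N : Type u) [AddCommGroup N] [Module S N] : EReal :=
  sInf {i : EReal | ∃ n : ℕ, i = (n : EReal) ∧
    Nontrivial (((Ext S (ModuleCat S) n).obj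
      (Opposite.op (ModuleCat.of S (IsLocalRing.ResidueField S)))).obj (ModuleCat.of S N))}

/-- The width of a module `N` over a commutative noetherian local ring `S`,
`inf { i | Tor_i^S(k, N) ≠ 0 }`, as an element of the extended (integer) line,
with `inf ∅ = ⊤`. -/
noncomputable def moduleWidth (S : Type u) [CommRing S] [IsLocalRing S]
    (N : Type u) [AddCommGroup N] [Module S N] : EReal :=
  sInf {i : EReal | ∃ n : ℕ, i = (n : EReal) ∧
    Nontrivial (((Tor (ModuleCat S) n).obj
      (ModuleCat.of S (IsLocalRing.ResidueField S))).obj (ModuleCat.of S N))}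

/-- `G` is Gorenstein injective: there is an exact complex of injective modules
`⋯ → I 1 → I 0 → I (-1) → ⋯` which stays exact after applying `Hom_R(J, -)` for every
injective module `J`, such that `G` is the kernel of `I 0 → I (-1)`. -/
def IsGorensteinInjective (R : Type u) [CommRing R]
    (G : Type u) [AddCommGroup G] [Module R G] : Prop :=
  ∃ (I : ℤ → Type u) (_ : ∀ n, AddCommGroup (I n)) (_ : ∀ n, Module R (I n))
    (d : ∀ n : ℤ, I (n + 1) →ₗ[R] I n),
    (∀ n, Module.Injective R (I n)) ∧
    (∀ n : ℤ, Function.Exact (d (n + 1)) (d n)) ∧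
    (∀ (J : Type u) (_ : AddCommGroup J) (_ : Module R J), Module.Injective R J →
      ∀ (n : ℤ) (f : J →ₗ[R] I (n + 1)), (d n).comp f = 0 →
        ∃ g : J →ₗ[R] I (n + 1 + 1), (d (n + 1)).comp g = f) ∧
    Nonempty (G ≃ₗ[R] LinearMap.ker (d (-1)))

section HomExact

variable {S : Type u} [CommRing S] {G : ℕ → Type u} [∀ n, AddCommGroup (G n)]
  [∀ n, Module S (G n)]

/-- Exactness of `Hom(G (n+2), N) → Hom(G (n+1), N) → Hom(G n, N)` for a sequence of modules
`G 0 → G 1 → G 2 → ⋯`. -/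
def HomExact (a : ∀ n, G n →ₗ[S] G (n + 1)) (n : ℕ) (N : Type u) [AddCommGroup N] [Module S N] :
    Prop :=
  ∀ g : G (n + 1) →ₗ[S] N, g.comp (a n) = 0 → ∃ h : G (n + 2) →ₗ[S] N, h.comp (a (n + 1)) = g

lemma exists_lift_of_exact {P A B C : Type u} [AddCommGroup P] [AddCommGroup A] [AddCommGroup B]
    [AddCommGroup C] [Module S P] [Module S A] [Module S B] [Module S C] [Module.Projective S P]
    {f : A →ₗ[S] B} {g : B →ₗ[S] C} (hfg : ∀ b, g b = 0 → ∃ y, f y = b) (h : P →ₗ[S] B)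
    (hh : g.comp h = 0) : ∃ l : P →ₗ[S] A, f.comp l = h := by
  obtain ⟨l, hl⟩ := Module.projective_lifting_property f.rangeRestrict
    (h.codRestrict (LinearMap.range f) fun x => hfg _ (LinearMap.congr_fun hh x))
    f.surjective_rangeRestrict
  refine ⟨l, LinearMap.ext fun x => ?_⟩
  exact congrArg Subtype.val (LinearMap.congr_fun hl x)

lemma exists_factor_of_exact {A B C I : Type u} [AddCommGroup A] [AddCommGroup B]
    [AddCommGroup C] [AddCommGroup I] [Module S A] [Module S B] [Module S C] [Module S I]
    [Module.Injective S I] {f : A →ₗ[S] B} {g : B →ₗ[S] C} (hfg : Function.Exact f g)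
    (h : B →ₗ[S] I) (hh : h.comp f = 0) : ∃ l : C →ₗ[S] I, l.comp g = h := by
  have hle : LinearMap.ker g ≤ LinearMap.ker h := by
    intro x hx
    obtain ⟨y, rfl⟩ := (hfg x).1 hx
    exact LinearMap.congr_fun hh y
  obtain ⟨l, hl⟩ := Module.Injective.out ((LinearMap.ker g).liftQ g le_rfl)
    (LinearMap.ker_eq_bot.1 (Submodule.ker_liftQ_eq_bot _ _ _ le_rfl))
    ((LinearMap.ker g).liftQ h hle)
  exact ⟨l, LinearMap.ext fun x => by simpa using hl (Submodule.Quotient.mk x)⟩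

variable (a : ∀ n, G n →ₗ[S] G (n + 1)) [∀ n, Module.Projective S (G n)] [Subsingleton (G 0)]
  {I M : Type u} [AddCommGroup I] [Module S I] [AddCommGroup M] [Module S M]

omit [∀ n, Module.Projective S (G n)] in
include a in
variable {a} in
/-- If the kernel of `φ` has vanishing cohomology one step below, then a map killed on `G n` into
the target of `ψ` lifts to such a map into its source. -/
lemma exists_lift_comp_eq_zero (ha : ∀ n, (a (n + 1)).comp (a n) = 0) {ψ : I →ₗ[S] M} (n : ℕ)
    (hK : ∀ m, n = m + 1 → HomExact a m (LinearMap.ker ψ))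
    (g : G (n + 1) →ₗ[S] I) (hg : ψ.comp (g.comp (a n)) = 0) :
    ∃ g' : G (n + 1) →ₗ[S] I, ψ.comp g' = ψ.comp g ∧ g'.comp (a n) = 0 := by
  obtain ⟨w, hw⟩ : ∃ w : G (n + 1) →ₗ[S] LinearMap.ker ψ,
      (LinearMap.ker ψ).subtype.comp (w.comp (a n)) = g.comp (a n) := by
    cases n with
    | zero =>
      refine ⟨0, LinearMap.ext fun x => ?_⟩
      rw [Subsingleton.elim x 0]; simp
    | succ m =>
      obtain ⟨w, hw⟩ := hK m rfl ((g.comp (a (m + 1))).codRestrict (LinearMap.ker ψ)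
        fun x => LinearMap.congr_fun hg x) (by
          ext x
          have : a (m + 1) (a m x) = 0 := LinearMap.congr_fun (ha m) x
          change g (a (m + 1) (a m x)) = 0
          rw [this, map_zero])
      refine ⟨w, ?_⟩
      rw [hw]
      rfl
  refine ⟨g - (LinearMap.ker ψ).subtype.comp w, ?_, ?_⟩
  · ext x; simp
  · ext x
    have := LinearMap.congr_fun hw x
    simpa [sub_eq_zero] using this.symm

lemma homExact_of_surjective (ha : ∀ n, (a (n + 1)).comp (a n) = 0) [Module.Injective S I]
    {φ : I →ₗ[S] M} (hφ : Function.Surjective φ) (n : ℕ) (hx : Function.Exact (a n) (a (n + 1)))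
    (hK : ∀ m, n = m + 1 → HomExact a m (LinearMap.ker φ)) : HomExact a n M := by
  intro g hg
  obtain ⟨g₁, rfl⟩ := Module.projective_lifting_property φ g hφ
  obtain ⟨g₂, h₂, h₃⟩ := exists_lift_comp_eq_zero ha n hK g₁ hg
  obtain ⟨l, rfl⟩ := exists_factor_of_exact hx g₂ h₃
  exact ⟨φ.comp l, h₂⟩

lemma homExact_ker_of_injective_of_exact (ha : ∀ n, (a (n + 1)).comp (a n) = 0) {J : ℤ → Type u}
    [∀ j, AddCommGroup (J j)] [∀ j, Module S (J j)] [∀ j, Module.Injective S (J j)]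
    (e : ∀ j : ℤ, J (j + 1) →ₗ[S] J j) (he : ∀ j, Function.Exact (e (j + 1)) (e j)) (n : ℕ)
    (hx : ∀ i ≤ n, Function.Exact (a i) (a (i + 1))) (j : ℤ) :
    HomExact a n (LinearMap.ker (e j)) := by
  induction n generalizing j with
  | zero =>
    refine homExact_of_surjective a ha
      (φ := (e (j + 1)).codRestrict (LinearMap.ker (e j)) fun x => LinearMap.mem_ker.2 ((he j).apply_apply_eq_zero x))
      ?_ 0 (hx 0 le_rfl) (by simp)
    rintro ⟨y, hy⟩
    obtain ⟨x, rfl⟩ := (he j y).1 hy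
    exact ⟨x, rfl⟩
  | succ n ih =>
    refine homExact_of_surjective a ha
      (φ := (e (j + 1)).codRestrict (LinearMap.ker (e j)) fun x => LinearMap.mem_ker.2 ((he j).apply_apply_eq_zero x))
      ?_ (n + 1) (hx _ le_rfl) ?_
    · rintro ⟨y, hy⟩
      obtain ⟨x, rfl⟩ := (he j y).1 hy
      exact ⟨x, rfl⟩
    · rintro m hm
      obtain rfl : n = m := by omega
      rw [LinearMap.ker_codRestrict]
      exact ih (fun i hi => hx i (by omega)) _

/-- Lifting of socle elements along `ψ` when the cohomology of `Hom(G, coker ψ)` vanishes. -/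
lemma exists_lift_socle (ha : ∀ n, (a (n + 1)).comp (a n) = 0) {I' : Type u} [AddCommGroup I']
    [Module S I'] [Module.Injective S I] {ψ : I' →ₗ[S] I} {φ : I →ₗ[S] M}
    (hφ : Function.Surjective φ) (hψφ : Function.Exact ψ φ) (n : ℕ)
    (hK : ∀ m, n = m + 1 → HomExact a m (LinearMap.ker ψ)) (hM : HomExact a n M)
    (m : Ideal S) [m.IsMaximal] {g₀ : G (n + 1)} (hg₀ : a (n + 1) g₀ = 0)
    (hg₁ : g₀ ∉ LinearMap.range (a n)) (hg₂ : ∀ x ∈ m, x • g₀ ∈ LinearMap.range (a n))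
    {c : I} (hc : ∀ x ∈ m, x • c = 0) :
    ∃ y : I', (∀ x ∈ m, x • y = 0) ∧ ψ y = c := by
  set Q := LinearMap.range (a n)
  let i : (S ⧸ m) →ₗ[S] G (n + 1) ⧸ Q := Submodule.liftQ m
    (LinearMap.toSpanSingleton S _ (Q.mkQ g₀)) (fun x hx => by
      simpa [← Submodule.Quotient.mk_smul] using hg₂ x hx)
  have hi : Function.Injective i := by
    rw [← LinearMap.ker_eq_bot]
    refine Submodule.ker_liftQ_eq_bot _ _ _ ?_
    intro x hx
    have hx' : x • g₀ ∈ Q := by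
      simpa [← Submodule.Quotient.mk_smul] using hx
    by_contra hxm
    obtain ⟨y, z, hz, hyz⟩ := Ideal.IsMaximal.exists_inv ‹m.IsMaximal› hxm
    refine hg₁ ?_
    have := Q.add_mem (Q.smul_mem y hx') (hg₂ z hz)
    rwa [← mul_smul, ← add_smul, hyz, one_smul] at this
  let f : (S ⧸ m) →ₗ[S] I := Submodule.liftQ m (LinearMap.toSpanSingleton S _ c)
    (fun x hx => by simpa using hc x hx)
  obtain ⟨l, hl⟩ := Module.Injective.out i hi f
  set g : G (n + 1) →ₗ[S] I := l.comp Q.mkQ with hg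
  have hgc : g g₀ = c := by
    have h₁ : i (Submodule.Quotient.mk 1) = Q.mkQ g₀ := by
      simp only [i, Submodule.liftQ_apply, LinearMap.toSpanSingleton_apply_one]
    have h₂ : f (Submodule.Quotient.mk 1) = c := by
      simp only [f, Submodule.liftQ_apply, LinearMap.toSpanSingleton_apply_one]
    rw [hg, LinearMap.comp_apply, ← h₁, hl, h₂]
  have hga : g.comp (a n) = 0 := by
    ext x
    have : Q.mkQ (a n x) = 0 := by simp [Q]
    simp only [hg, LinearMap.comp_apply, this, map_zero, LinearMap.zero_apply]
  obtain ⟨h', hh'⟩ := hM (φ.comp g) (by rw [LinearMap.comp_assoc, hga, LinearMap.comp_zero])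
  obtain ⟨h, rfl⟩ := Module.projective_lifting_property φ h' hφ
  obtain ⟨g₃, hg₃⟩ := exists_lift_of_exact (fun b => (hψφ b).1) (g - h.comp (a (n + 1))) (by
    rw [LinearMap.comp_sub, ← hh', LinearMap.comp_assoc, sub_self])
  obtain ⟨g₄, hg₄, hg₅⟩ := exists_lift_comp_eq_zero ha n hK g₃ (by
    rw [← LinearMap.comp_assoc, hg₃, LinearMap.sub_comp, hga, LinearMap.comp_assoc, ha,
      LinearMap.comp_zero, sub_zero])
  refine ⟨g₄ g₀, fun x hx => ?_, ?_⟩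
  · obtain ⟨t, ht⟩ := hg₂ x hx
    rw [← map_smul, ← ht]
    exact LinearMap.congr_fun hg₅ t
  · have := LinearMap.congr_fun (hg₄.trans hg₃) g₀
    simpa [hg₀, hgc] using this

end HomExact

/-- A linear map from an injective module which lifts all generators of prime cyclic submodules up
to a unit at the prime is surjective. -/
lemma surjective_of_forall_prime {R : Type u} [CommRing R] [IsNoetherianRing R] {I J : Type u}
    [AddCommGroup I] [Module R I] [AddCommGroup J] [Module R J] [Module.Injective R I]
    (φ : I →ₗ[R] J)
    (h : ∀ (p : PrimeSpectrum R) (c : J), (∀ x, x ∈ p.asIdeal ↔ x • c = 0) →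
      ∃ y : I, (∀ x ∈ p.asIdeal, x • y = 0) ∧ ∃ s ∉ p.asIdeal, φ y = s • c) :
    Function.Surjective φ := by
  obtain ⟨A, hA⟩ : ∃ A : Submodule R I, Maximal (fun A => Disjoint A (LinearMap.ker φ)) A := by
    obtain ⟨A, -, hA⟩ := zorn_le_nonempty₀ {A : Submodule R I | Disjoint A (LinearMap.ker φ)}
      (fun c hc hch y hy => ⟨sSup c, by
        rw [Set.mem_ofPred_eq, DirectedOn.disjoint_sSup_left hch.directedOn]
        exact fun b hb => hc hb, fun z hz => le_sSup hz⟩) ⊥ disjoint_bot_left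
    exact ⟨A, hA⟩
  have hinj : ∀ x ∈ A, φ x = 0 → x = 0 := fun x hx h0 =>
    (Submodule.disjoint_def.1 hA.prop) x hx h0
  have hess : ∀ C : Submodule R J, Disjoint C (A.map φ) → C = ⊥ := by
    intro C hC
    by_contra hne
    have : Nontrivial C := Submodule.nontrivial_iff_ne_bot.2 hne
    obtain ⟨p, hp⟩ := associatedPrimes.nonempty R C
    obtain ⟨hp₁, ⟨c, hcC⟩, hc⟩ := isAssociatedPrime_iff.1 hp
    have hcp : ∀ x, x ∈ p ↔ x • c = 0 := fun x => by
      rw [hc, Submodule.mem_colon_singleton, Submodule.mem_bot, ← Subtype.coe_inj]; rfl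
    obtain ⟨y, hy, s, hs, hys⟩ := h ⟨p, hp₁⟩ c hcp
    have hyC : φ y ∈ C := hys ▸ C.smul_mem s hcC
    have hdis : Disjoint (A ⊔ Submodule.span R {y}) (LinearMap.ker φ) := by
      rw [Submodule.disjoint_def]
      rintro z hz hz0
      obtain ⟨b, hb, w, hw, rfl⟩ := Submodule.mem_sup.1 hz
      obtain ⟨r, rfl⟩ := Submodule.mem_span_singleton.1 hw
      rw [LinearMap.mem_ker, map_add, map_smul] at hz0
      have hφb : φ b = 0 := by
        refine Submodule.disjoint_def.1 hC _ ?_ ⟨b, hb, rfl⟩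
        rw [eq_neg_of_add_eq_zero_left hz0]
        exact C.neg_mem (C.smul_mem r hyC)
      rw [hφb, zero_add, hys, ← mul_smul, ← hcp] at hz0
      rw [hinj b hb hφb, hy r ((hp₁.mem_or_mem hz0).resolve_right hs), add_zero]
    have hyA : y ∈ A := hA.2 hdis le_sup_left
      (Submodule.mem_sup_right (Submodule.mem_span_singleton_self y))
    refine hs ((hcp s).2 ?_)
    rw [← hys]
    exact Submodule.disjoint_def.1 hC _ hyC ⟨y, hyA, rfl⟩
  have hφA : Function.Injective (φ.comp A.subtype) := by
    rw [injective_iff_map_eq_zero]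
    intro x hx
    exact Subtype.ext (hinj x x.2 hx)
  obtain ⟨ψ, hψ⟩ := Module.Injective.out (A.map φ).subtype (Submodule.subtype_injective _)
    (A.subtype.comp (LinearEquiv.ofBijective ((φ.comp A.subtype).codRestrict (A.map φ)
      (fun x => ⟨x, x.2, rfl⟩)) ⟨fun x y hxy => hφA (congrArg Subtype.val hxy), by
        rintro ⟨_, x, hx, rfl⟩; exact ⟨⟨x, hx⟩, rfl⟩⟩).symm.toLinearMap)
  have hψA : ∀ x ∈ A, ψ (φ x) = x := by
    intro x hx
    have := hψ ⟨φ x, x, hx, rfl⟩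
    rw [Submodule.subtype_apply] at this
    rw [this]
    simp only [LinearMap.comp_apply, LinearEquiv.coe_coe]
    refine congrArg Subtype.val (a₂ := (⟨x, hx⟩ : A)) ?_
    rw [LinearEquiv.symm_apply_eq]
    rfl
  have hker : LinearMap.ker (φ.comp ψ) = ⊥ := by
    refine hess _ (Submodule.disjoint_def.2 ?_)
    rintro _ hx ⟨x, hxA, rfl⟩
    simpa [hψA x hxA] using hx
  have hle : A ≤ LinearMap.range ψ := fun x hx => ⟨φ x, hψA x hx⟩
  have hrange : LinearMap.range ψ ≤ A := by
    refine hA.2 (Submodule.disjoint_def.2 ?_) hle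
    rintro _ ⟨x, rfl⟩ hx
    have : x ∈ LinearMap.ker (φ.comp ψ) := hx
    rw [hker, Submodule.mem_bot] at this
    rw [this, map_zero]
  intro j
  refine ⟨ψ j, ?_⟩
  refine LinearMap.ker_eq_bot.1 hker ?_
  simp only [LinearMap.comp_apply]
  rw [hψA _ (hrange ⟨j, rfl⟩)]

section Balance

open TensorProduct

variable {S : Type u} [CommRing S] {F : ℕ → Type u} [∀ n, AddCommGroup (F n)]
  [∀ n, Module S (F n)] (d : ∀ n, F (n + 1) →ₗ[S] F n)

/-- Exactness of `F ⊗ N` in degree `n + 1`. -/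
def TensorExact (n : ℕ) (N : Type u) [AddCommGroup N] [Module S N] : Prop :=
  Function.Exact ((d (n + 1)).rTensor N) ((d n).rTensor N)

variable {N' Q N X : Type u} [AddCommGroup N'] [Module S N'] [AddCommGroup Q] [Module S Q]
  [AddCommGroup N] [Module S N] [AddCommGroup X] [Module S X]

lemma rTensor_lTensor_apply {A B C D : Type u} [AddCommGroup A] [Module S A] [AddCommGroup B]
    [Module S B] [AddCommGroup C] [Module S C] [AddCommGroup D] [Module S D]
    (f : A →ₗ[S] B) (g : C →ₗ[S] D) (x : A ⊗[S] C) :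
    f.rTensor D (g.lTensor A x) = g.lTensor B (f.rTensor C x) := by
  rw [← LinearMap.comp_apply, ← LinearMap.comp_apply, LinearMap.rTensor_comp_lTensor,
    LinearMap.lTensor_comp_rTensor]

lemma tensorExact_iff_range [∀ n, Module.Projective S (F n)] (hdd : ∀ n x, d n (d (n + 1) x) = 0)
    {ι : N' →ₗ[S] Q} {π : Q →ₗ[S] N} (hι : Function.Injective ι) (hπ : Function.Surjective π)
    (hιπ : Function.Exact ι π) (m : ℕ) (hQ : TensorExact d (m + 1) Q) :
    TensorExact d (m + 1) N ↔ ∀ x : F (m + 1) ⊗[S] N',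
      ι.lTensor (F (m + 1)) x ∈ LinearMap.range ((d (m + 1)).rTensor Q) →
      x ∈ LinearMap.range ((d (m + 1)).rTensor N') := by
  have hinj (i) : Function.Injective (ι.lTensor (F i)) :=
    Module.Flat.lTensor_preserves_injective_linearMap _ hι
  have hex (i) : Function.Exact (ι.lTensor (F i)) (π.lTensor (F i)) := lTensor_exact _ hιπ hπ
  have hsurj (i) : Function.Surjective (π.lTensor (F i)) := LinearMap.lTensor_surjective _ hπ
  have hdd' (Y : Type u) [AddCommGroup Y] [Module S Y] (i) (x : F (i + 2) ⊗[S] Y) :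
      (d i).rTensor Y ((d (i + 1)).rTensor Y x) = 0 := by
    rw [← LinearMap.comp_apply, ← LinearMap.rTensor_comp,
      show (d i).comp (d (i + 1)) = 0 from LinearMap.ext (hdd i), LinearMap.rTensor_zero,
      LinearMap.zero_apply]
  constructor
  · rintro h x ⟨y, hy⟩
    obtain ⟨w'', hw''⟩ := (h (π.lTensor _ y)).1 (by
      rw [rTensor_lTensor_apply, hy]; exact (hex _).apply_apply_eq_zero x)
    obtain ⟨w, rfl⟩ := hsurj _ w''
    obtain ⟨y', hy'⟩ := (hex _ (y - (d (m + 2)).rTensor Q w)).1 (by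
      rw [map_sub, ← rTensor_lTensor_apply, hw'', sub_self])
    refine ⟨y', hinj _ ?_⟩
    rw [← rTensor_lTensor_apply, hy', map_sub, hdd', sub_zero, hy]
  · intro h z
    constructor
    · intro hz
      obtain ⟨y, rfl⟩ := hsurj _ z
      rw [rTensor_lTensor_apply] at hz
      obtain ⟨x, hx⟩ := (hex _ _).1 hz
      obtain ⟨y', rfl⟩ := h x ⟨y, hx.symm⟩
      obtain ⟨w, hw⟩ := (hQ (y - ι.lTensor _ y')).1 (by
        rw [map_sub, rTensor_lTensor_apply, hx, sub_self])
      refine ⟨π.lTensor _ w, ?_⟩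
      rw [rTensor_lTensor_apply, hw, map_sub, (hex _).apply_apply_eq_zero, sub_zero]
    · rintro ⟨w, rfl⟩
      exact hdd' N _ w

lemma tensorExact_succ_iff [∀ n, Module.Projective S (F n)] (hdd : ∀ n x, d n (d (n + 1) x) = 0)
    {ι : N' →ₗ[S] Q} {π : Q →ₗ[S] N} (hι : Function.Injective ι) (hπ : Function.Surjective π)
    (hιπ : Function.Exact ι π) (m : ℕ) (hQ : ∀ i, TensorExact d (i + 1) Q) :
    TensorExact d (m + 2) N ↔ TensorExact d (m + 1) N' := by
  have hinj (i) : Function.Injective (ι.lTensor (F i)) :=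
    Module.Flat.lTensor_preserves_injective_linearMap _ hι
  rw [tensorExact_iff_range d hdd hι hπ hιπ _ (hQ _)]
  refine forall_congr' fun x => ?_
  have : (d (m + 1)).rTensor N' x = 0 ↔
      ι.lTensor (F (m + 2)) x ∈ LinearMap.range ((d (m + 2)).rTensor Q) := by
    refine Iff.trans ?_ (hQ m (ι.lTensor _ x))
    rw [rTensor_lTensor_apply, ← map_zero (ι.lTensor (F (m + 1))), (hinj _).eq_iff]
  rw [this]
  refine ⟨fun h => ⟨h, ?_⟩, fun h => h.1⟩
  rintro ⟨w, rfl⟩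
  exact ⟨ι.lTensor _ w, rTensor_lTensor_apply _ _ _⟩

lemma tensorExact_one_iff [∀ n, Module.Projective S (F n)] (hdd : ∀ n x, d n (d (n + 1) x) = 0)
    {ε : F 1 →ₗ[S] X} (hε : Function.Surjective ε) (hd₀ : Function.Exact (d 1) ε)
    {ι : N' →ₗ[S] Q} {π : Q →ₗ[S] N} (hι : Function.Injective ι) (hπ : Function.Surjective π)
    (hιπ : Function.Exact ι π) (hQ : ∀ i, TensorExact d (i + 1) Q) :
    TensorExact d 1 N ↔ Function.Injective (ι.lTensor X) := by
  rw [tensorExact_iff_range d hdd hι hπ hιπ _ (hQ _), injective_iff_map_eq_zero]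
  have h (Y : Type u) [AddCommGroup Y] [Module S Y] :=
    rTensor_exact Y hd₀ hε
  rw [(LinearMap.rTensor_surjective N' hε).forall]
  refine forall_congr' fun x => ?_
  rw [← rTensor_lTensor_apply, h, h]
  rfl

lemma tensorExact_zero_iff [Subsingleton (F 0)]
    {ε : F 1 →ₗ[S] X} (hε : Function.Surjective ε) (hd₀ : Function.Exact (d 1) ε) :
    TensorExact d 0 N ↔ Subsingleton (X ⊗[S] N) := by
  have h := rTensor_exact N hd₀ hε
  have h0 (x) : (d 0).rTensor N x = 0 := Subsingleton.elim _ _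
  constructor
  · intro H
    refine ⟨fun a b => ?_⟩
    obtain ⟨a, rfl⟩ := LinearMap.rTensor_surjective N hε a
    obtain ⟨b, rfl⟩ := LinearMap.rTensor_surjective N hε b
    rw [(h a).2 ((H a).1 (h0 a)), (h b).2 ((H b).1 (h0 b))]
  · intro H x
    exact ⟨fun _ => (h x).1 (Subsingleton.elim _ _), fun _ => h0 x⟩

lemma subsingleton_tensor_iff_surjective {Q₀ Q₁ : Type u} [AddCommGroup Q₀] [Module S Q₀]
    [AddCommGroup Q₁] [Module S Q₁] {e : Q₁ →ₗ[S] Q₀} {ε : Q₀ →ₗ[S] N}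
    (hε : Function.Surjective ε) (he : Function.Exact e ε) :
    Subsingleton (X ⊗[S] N) ↔ Function.Surjective (e.lTensor X) := by
  have h := lTensor_exact X he hε
  constructor
  · intro H x
    exact (h x).1 (Subsingleton.elim _ _)
  · intro H
    refine ⟨fun a b => ?_⟩
    obtain ⟨a, rfl⟩ := LinearMap.lTensor_surjective X hε a
    obtain ⟨b, rfl⟩ := LinearMap.lTensor_surjective X hε b
    rw [(h a).2 (H a), (h b).2 (H b)]

lemma exact_subtype_ker (η : Q →ₗ[S] N) : Function.Exact (LinearMap.ker η).subtype η := by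
  intro x
  simp

lemma exists_surjective_onto_ker {Q₀ Q₁ Q₂ : Type u} [AddCommGroup Q₀] [Module S Q₀]
    [AddCommGroup Q₁] [Module S Q₁] [AddCommGroup Q₂] [Module S Q₂] {e' : Q₂ →ₗ[S] Q₁}
    {e : Q₁ →ₗ[S] Q₀} {η : Q₀ →ₗ[S] N} (he : Function.Exact e η) (he' : Function.Exact e' e) :
    ∃ η' : Q₁ →ₗ[S] LinearMap.ker η, Function.Surjective η' ∧ Function.Exact e' η' ∧
      (LinearMap.ker η).subtype.comp η' = e := by
  refine ⟨e.codRestrict _ he.apply_apply_eq_zero, ?_, ?_, rfl⟩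
  · rintro ⟨x, hx⟩
    obtain ⟨y, rfl⟩ := (he x).1 hx
    exact ⟨y, rfl⟩
  · intro x
    rw [← he' x, Subtype.ext_iff]
    rfl

lemma tensorExact_succ_iff_exact [∀ n, Module.Projective S (F n)]
    (hd : ∀ n, Function.Exact (d (n + 2)) (d (n + 1))) [Subsingleton (F 0)]
    {ε : F 1 →ₗ[S] X} (hε : Function.Surjective ε) (hd₀ : Function.Exact (d 1) ε) (n : ℕ)
    {Q : ℕ → Type u} [∀ n, AddCommGroup (Q n)] [∀ n, Module S (Q n)]
    [∀ n, Module.Projective S (Q n)] (e : ∀ n, Q (n + 1) →ₗ[S] Q n) (η : Q 0 →ₗ[S] N)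
    (hη : Function.Surjective η) (he₀ : Function.Exact (e 0) η)
    (he : ∀ n, Function.Exact (e (n + 1)) (e n)) :
    TensorExact d (n + 1) N ↔ Function.Exact ((e (n + 1)).lTensor X) ((e n).lTensor X) := by
  have hdd (n x) : d n (d (n + 1) x) = 0 := by
    cases n with
    | zero => exact Subsingleton.elim _ _
    | succ n => exact (hd n).apply_apply_eq_zero x
  have hQ (j i) : TensorExact d (i + 1) (Q j) := Module.Flat.rTensor_exact _ (hd i)
  induction n generalizing N Q with
  | zero =>
    obtain ⟨η', hη', he', hcomp⟩ := exists_surjective_onto_ker he₀ (he 0)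
    rw [tensorExact_one_iff d hdd hε hd₀ Subtype.val_injective hη (exact_subtype_ker η) (hQ 0),
      injective_iff_map_eq_zero, (LinearMap.lTensor_surjective X hη').forall]
    refine forall_congr' fun x => ?_
    rw [← lTensor_exact X he' hη' x, ← LinearMap.comp_apply, ← LinearMap.lTensor_comp, hcomp]
    refine ⟨fun h => ⟨h, fun h' => ?_⟩, fun h => h.1⟩
    rw [← hcomp, LinearMap.lTensor_comp, LinearMap.comp_apply, h', map_zero]
  | succ n ih =>
    obtain ⟨η', hη', he', hcomp⟩ := exists_surjective_onto_ker he₀ (he 0)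
    rw [tensorExact_succ_iff d hdd Subtype.val_injective hη (exact_subtype_ker η) n (hQ 0)]
    exact ih (N := LinearMap.ker η) (Q := fun n => Q (n + 1)) (fun n => e (n + 1)) η' hη' he' (fun n => he (n + 1)) (fun j => hQ (j + 1))

/-- `F ⊗ N → Hom(F^*, N)`. -/
noncomputable def tensorHomDualEquiv (A N : Type u) [AddCommGroup A] [Module S A]
    [Module.Free S A] [Module.Finite S A] [AddCommGroup N] [Module S N] :
    A ⊗[S] N ≃ₗ[S] (Module.Dual S A →ₗ[S] N) :=
  TensorProduct.congr (Module.evalEquiv S A) (LinearEquiv.refl S N) ≪≫ₗ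
    dualTensorHomEquiv S (Module.Dual S A) N

lemma tensorHomDualEquiv_rTensor {A B N : Type u} [AddCommGroup A] [Module S A]
    [Module.Free S A] [Module.Finite S A] [AddCommGroup B] [Module S B]
    [Module.Free S B] [Module.Finite S B] [AddCommGroup N] [Module S N] (f : A →ₗ[S] B)
    (t : A ⊗[S] N) :
    tensorHomDualEquiv B N (f.rTensor N t) = (tensorHomDualEquiv A N t).comp f.dualMap := by
  induction t with
  | zero => simp
  | add x y hx hy => simp only [map_add, hx, hy, LinearMap.add_comp]
  | tmul x y => ext l; simp [tensorHomDualEquiv]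

lemma homExact_dualMap_iff [∀ n, Module.Free S (F n)] [∀ n, Module.Finite S (F n)] (n : ℕ) :
    HomExact (fun n => (d n).dualMap) n N ↔
      ((d n).rTensor N).ker ≤ ((d (n + 1)).rTensor N).range := by
  unfold HomExact
  rw [(tensorHomDualEquiv (F (n + 1)) N).surjective.forall]
  refine forall_congr' fun x => ?_
  rw [(tensorHomDualEquiv (F (n + 2)) N).surjective.exists, ← tensorHomDualEquiv_rTensor]
  simp only [← tensorHomDualEquiv_rTensor, EmbeddingLike.map_eq_zero_iff,
    EmbeddingLike.apply_eq_iff_eq]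
  rfl

end Balance

section Resolution

variable {S : Type u} [CommRing S] {F : ℕ → Type u} [∀ n, AddCommGroup (F n)]
  [∀ n, Module S (F n)] (d : ∀ n, F (n + 1) →ₗ[S] F n)

/-- Exactness of `Hom(F n, N) → Hom(F (n+1), N) → Hom(F (n+2), N)`. -/
def CoHomExact (n : ℕ) (N : Type u) [AddCommGroup N] [Module S N] : Prop :=
  ∀ g : F (n + 1) →ₗ[S] N, g.comp (d (n + 1)) = 0 → ∃ h : F n →ₗ[S] N, h.comp (d n) = g

lemma coHomExact_self_iff (hdd : ∀ n, (d n).comp (d (n + 1)) = 0) (n : ℕ) :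
    CoHomExact d n S ↔ Function.Exact (d n).dualMap (d (n + 1)).dualMap := by
  refine ⟨fun h g => ⟨h g, ?_⟩, fun h g => (h g).1⟩
  rintro ⟨h, rfl⟩
  change (h.comp (d n)).comp (d (n + 1)) = 0
  rw [LinearMap.comp_assoc, hdd, LinearMap.comp_zero]

variable {X N : Type u} [AddCommGroup X] [Module S X] [AddCommGroup N] [Module S N]

lemma comp_eq_zero_of_resolution [Subsingleton (F 0)]
    (hd : ∀ n, Function.Exact (d (n + 2)) (d (n + 1))) (n : ℕ) :
    (d n).comp (d (n + 1)) = 0 := by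
  cases n with
  | zero => exact LinearMap.ext fun _ => Subsingleton.elim _ _
  | succ n => exact (hd n).linearMap_comp_eq_zero

lemma exists_contraction_of_smul_eq_zero [∀ n, Module.Projective S (F n)]
    (hd : ∀ n, Function.Exact (d (n + 2)) (d (n + 1))) [Subsingleton (F 0)]
    {ε : F 1 →ₗ[S] X} (hd₀ : Function.Exact (d 1) ε) {x : S} (hx : ∀ y : X, x • y = 0) (n : ℕ) :
    ∃ (s : F (n + 1) →ₗ[S] F (n + 2)) (s' : F n →ₗ[S] F (n + 1)),
      ∀ y, x • y = d (n + 1) (s y) + s' (d n y) := by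
  induction n with
  | zero =>
    obtain ⟨s, hs⟩ := exists_lift_of_exact (f := d 1) (g := ε) (fun b hb => (hd₀ b).1 hb)
      (x • LinearMap.id) (LinearMap.ext fun y => by simp [hx])
    exact ⟨s, 0, fun y => by simpa using (LinearMap.congr_fun hs y).symm⟩
  | succ n ih =>
    obtain ⟨s, s', h⟩ := ih
    obtain ⟨t, ht⟩ := exists_lift_of_exact (f := d (n + 2)) (g := d (n + 1))
      (fun b hb => (hd n b).1 hb) (x • LinearMap.id - s.comp (d (n + 1)))
      (LinearMap.ext fun y => by
        have h1 := h (d (n + 1) y)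
        have h2 : d n (d (n + 1) y) = 0 :=
          LinearMap.congr_fun (comp_eq_zero_of_resolution d hd n) y
        rw [h2, map_zero, add_zero] at h1
        simp [h1])
    refine ⟨t, s, fun y => ?_⟩
    have := LinearMap.congr_fun ht y
    simp only [LinearMap.comp_apply, LinearMap.sub_apply, LinearMap.smul_apply,
      LinearMap.id_apply] at this
    rw [this, sub_add_cancel]

lemma smul_mem_range_dualMap [∀ n, Module.Projective S (F n)]
    (hd : ∀ n, Function.Exact (d (n + 2)) (d (n + 1))) [Subsingleton (F 0)]
    {ε : F 1 →ₗ[S] X} (hd₀ : Function.Exact (d 1) ε) {x : S} (hx : ∀ y : X, x • y = 0) (n : ℕ)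
    {g : Module.Dual S (F (n + 1))} (hg : (d (n + 1)).dualMap g = 0) :
    x • g ∈ LinearMap.range (d n).dualMap := by
  obtain ⟨s, s', h⟩ := exists_contraction_of_smul_eq_zero d hd hd₀ hx n
  refine ⟨g.comp s', LinearMap.ext fun y => ?_⟩
  have h1 : g (d (n + 1) (s y)) = 0 := LinearMap.congr_fun hg (s y)
  have := congrArg g (h y)
  rw [map_smul, map_add, h1, zero_add] at this
  exact this.symm

lemma CoHomExact.of_exact_smul [∀ n, Module.Projective S (F n)] {N' : Type u} [AddCommGroup N']
    [Module S N'] (hdd : ∀ n, (d n).comp (d (n + 1)) = 0) (hN : ∀ n, CoHomExact d n N) {x : S}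
    (hx : IsSMulRegular N x) {π : N →ₗ[S] N'} (hπ : Function.Surjective π)
    (hxπ : ∀ y, π y = 0 ↔ ∃ z, x • z = y) (n : ℕ) : CoHomExact d n N' := by
  intro g hg
  obtain ⟨g', hg'⟩ := Module.projective_lifting_property π g hπ
  obtain ⟨w, hw⟩ := exists_lift_of_exact (f := x • (LinearMap.id : N →ₗ[S] N)) (g := π)
    (fun b hb => (hxπ b).1 hb) (g'.comp (d (n + 1))) (by
      rw [← LinearMap.comp_assoc, hg', hg])
  obtain ⟨v, hv⟩ := hN (n + 1) w (LinearMap.ext fun y => hx (by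
    have := LinearMap.congr_fun hw (d (n + 2) y)
    have h0 : d (n + 1) (d (n + 2) y) = 0 := LinearMap.congr_fun (hdd (n + 1)) y
    simpa [h0] using this))
  obtain ⟨h, hh⟩ := hN n (g' - x • v) (by
    rw [LinearMap.sub_comp, ← hw, ← hv]
    ext y; simp)
  refine ⟨π.comp h, ?_⟩
  rw [LinearMap.comp_assoc, hh]
  ext y
  have h0 : π (x • v y) = 0 := (hxπ _).2 ⟨_, rfl⟩
  have h1 : π (g' y) = g y := LinearMap.congr_fun hg' y
  simp only [LinearMap.comp_apply, LinearMap.sub_apply, LinearMap.smul_apply, map_sub, h0, h1,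
    sub_zero]

lemma CoHomExact.congr {N' : Type u} [AddCommGroup N'] [Module S N'] {n : ℕ}
    (h : CoHomExact d n N) (e : N ≃ₗ[S] N') : CoHomExact d n N' := by
  intro g hg
  obtain ⟨h, hh⟩ := h (e.symm.toLinearMap.comp g) (by
    rw [LinearMap.comp_assoc, hg, LinearMap.comp_zero])
  refine ⟨e.toLinearMap.comp h, ?_⟩
  rw [LinearMap.comp_assoc, hh]
  ext y; simp

lemma exists_not_coHomExact [IsLocalRing S] [IsNoetherianRing S] [Nontrivial X]
    [Module.Finite S X] [∀ n, Module.Projective S (F n)]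
    (hd : ∀ n, Function.Exact (d (n + 2)) (d (n + 1))) [Subsingleton (F 0)]
    {ε : F 1 →ₗ[S] X} (hε : Function.Surjective ε) (hd₀ : Function.Exact (d 1) ε) :
    ∃ n, ¬ CoHomExact d n S := by
  by_contra! H
  have hm : Module.annihilator S X ≤ IsLocalRing.maximalIdeal S :=
    IsLocalRing.le_maximalIdeal fun h => not_subsingleton X (Module.annihilator_eq_top_iff.1 h)
  have key : ∀ J : Ideal S, J ≠ ⊤ → ¬ ∀ n, CoHomExact d n (S ⧸ J) := by
    intro J
    induction J using WellFoundedGT.induction with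
    | ind J ih =>
    intro hJ hN
    have hsub : Subsingleton (X →ₗ[S] S ⧸ J) := by
      refine subsingleton_of_forall_eq 0 fun f => ?_
      obtain ⟨h, hh⟩ := hN 0 (f.comp ε) (by
        rw [LinearMap.comp_assoc, hd₀.linearMap_comp_eq_zero, LinearMap.comp_zero])
      ext y
      obtain ⟨y, rfl⟩ := hε y
      rw [← LinearMap.comp_apply, ← hh, LinearMap.comp_apply,
        Subsingleton.elim (d 0 y) 0, map_zero, LinearMap.zero_apply]
    obtain ⟨x, hx, hreg⟩ := IsSMulRegular.subsingleton_linearMap_iff.1 hsub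
    have hle : J ≤ J ⊔ Ideal.span {x} := le_sup_left
    refine ih (J ⊔ Ideal.span {x}) (lt_of_le_of_ne hle fun h => ?_) ?_ ?_
    · have hxJ : x ∈ J := h ▸ Ideal.mem_sup_right (Ideal.mem_span_singleton_self x)
      have h1 : x • (Submodule.Quotient.mk 1 : S ⧸ J) = x • 0 := by
        rw [← Submodule.Quotient.mk_smul, smul_zero, Submodule.Quotient.mk_eq_zero]
        simpa using hxJ
      exact hJ ((Ideal.eq_top_iff_one J).2 ((Submodule.Quotient.mk_eq_zero J).1 (hreg h1)))
    · refine ne_top_of_le_ne_top (Ideal.IsPrime.ne_top inferInstance)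
        (sup_le (IsLocalRing.le_maximalIdeal hJ) ?_)
      rw [Ideal.span_singleton_le_iff_mem]
      exact hm hx
    · refine CoHomExact.of_exact_smul d (comp_eq_zero_of_resolution d hd) hN hreg
        (π := Submodule.mapQ J (J ⊔ Ideal.span {x}) LinearMap.id hle) ?_ ?_
      · intro y
        obtain ⟨y, rfl⟩ := Submodule.Quotient.mk_surjective _ y
        exact ⟨Submodule.Quotient.mk y, rfl⟩
      · intro y
        obtain ⟨y, rfl⟩ := Submodule.Quotient.mk_surjective _ y
        rw [Submodule.mapQ_apply, LinearMap.id_apply, Submodule.Quotient.mk_eq_zero,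
          (Submodule.Quotient.mk_surjective J).exists]
        simp only [← Submodule.Quotient.mk_smul, Submodule.Quotient.eq]
        constructor
        · intro hy
          obtain ⟨j, hj, z, hz, rfl⟩ := Submodule.mem_sup.1 hy
          obtain ⟨a, rfl⟩ := Ideal.mem_span_singleton'.1 hz
          refine ⟨a, ?_⟩
          convert J.neg_mem hj using 1
          simp only [smul_eq_mul]
          ring
        · rintro ⟨a, ha⟩
          rw [← sub_sub_cancel (x • a) y]
          refine Ideal.sub_mem _ (Ideal.mem_sup_right ?_) (hle ha)
          exact Ideal.mul_mem_right _ _ (Ideal.mem_span_singleton_self x)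
  exact key ⊥ bot_ne_top fun n => (H n).congr d (Submodule.quotEquivOfEqBot ⊥ rfl).symm

/-- Resolutions by finite free modules exist, indexed so that degree `0` is the zero module. -/
lemma exists_free_resolution (S : Type u) [CommRing S] [IsNoetherianRing S] (X : Type u)
    [AddCommGroup X] [Module S X] [Module.Finite S X] :
    ∃ (F : ℕ → Type u) (_ : ∀ n, AddCommGroup (F n)) (_ : ∀ n, Module S (F n))
      (d : ∀ n, F (n + 1) →ₗ[S] F n) (ε : F 1 →ₗ[S] X), (∀ n, Module.Free S (F n)) ∧
      (∀ n, Module.Finite S (F n)) ∧ Subsingleton (F 0) ∧ Function.Surjective ε ∧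
      Function.Exact (d 1) ε ∧ ∀ n, Function.Exact (d (n + 2)) (d (n + 1)) := by
  obtain ⟨r₁, ε, hε⟩ := Module.Finite.exists_fin' S X
  have next (b : ℕ) (K : Submodule S (Fin b → S)) :
      ∃ (a : ℕ) (f : (Fin a → S) →ₗ[S] (Fin b → S)), LinearMap.range f = K := by
    obtain ⟨a, f, hf⟩ := Module.Finite.exists_fin' S K
    refine ⟨a, K.subtype.comp f, ?_⟩
    rw [LinearMap.range_comp, LinearMap.range_eq_top.2 hf, Submodule.map_top,
      Submodule.range_subtype]
  choose a f hf using next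
  let s : ℕ → Σ b : ℕ, Submodule S (Fin b → S) := fun n =>
    Nat.rec ⟨r₁, LinearMap.ker ε⟩ (fun _ t => ⟨a t.1 t.2, LinearMap.ker (f t.1 t.2)⟩) n
  let r : ℕ → ℕ := fun n => Nat.casesOn n 0 fun n => (s n).1
  have hfree (n : ℕ) : Module.Free S (Fin n → S) := inferInstance
  have hfin (n : ℕ) : Module.Finite S (Fin n → S) := inferInstance
  refine ⟨fun n => Fin (r n) → S, inferInstance, inferInstance, fun n => match n with
    | 0 => 0
    | n + 1 => f (s n).1 (s n).2, ε, fun n => hfree (r n), fun n => hfin (r n),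
    inferInstanceAs (Subsingleton (Fin 0 → S)), hε, ?_, fun n => ?_⟩
  · rw [LinearMap.exact_iff]
    exact (hf _ _).symm
  · rw [LinearMap.exact_iff]
    exact (hf _ _).symm

end Resolution

section DerivedFunctors

variable {S : Type u} [CommRing S]

open CategoryTheory Limits

/-- The chain complex attached to a sequence of linear maps with vanishing composites. -/
noncomputable def chainComplexOfLinearMap {F : ℕ → Type u} [∀ n, AddCommGroup (F n)]
    [∀ n, Module S (F n)] (d : ∀ n, F (n + 1) →ₗ[S] F n)
    (hd : ∀ n x, d n (d (n + 1) x) = 0) : ChainComplex (ModuleCat.{u} S) ℕ :=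
  ChainComplex.of (fun n => ModuleCat.of S (F n)) (fun n => ModuleCat.ofHom (d n))
    (fun n => by ext x; exact hd n x)

lemma chainComplexOfLinearMap_d {F : ℕ → Type u} [∀ n, AddCommGroup (F n)]
    [∀ n, Module S (F n)] (d : ∀ n, F (n + 1) →ₗ[S] F n)
    (hd : ∀ n x, d n (d (n + 1) x) = 0) (n : ℕ) :
    (chainComplexOfLinearMap d hd).d (n + 1) n = ModuleCat.ofHom (d n) :=
  ChainComplex.of_d (fun n => ModuleCat.of S (F n)) (fun n => ModuleCat.ofHom (d n)) n

/-- An exact complex of projective modules augmented to `X` is a projective resolution of `X`. -/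
noncomputable def projectiveResolutionOfAugmented {X : ModuleCat.{u} S}
    (C : ChainComplex (ModuleCat.{u} S) ℕ) [∀ n, Projective (C.X n)] (f : C.X 0 ⟶ X)
    (w : C.d 1 0 ≫ f = 0) (hf : Function.Surjective f.hom)
    (hf₀ : Function.Exact (C.d 1 0).hom f.hom)
    (hC : ∀ n, Function.Exact (C.d (n + 2) (n + 1)).hom (C.d (n + 1) n).hom) :
    ProjectiveResolution X where
  complex := C
  projective n := inferInstance
  π := (ChainComplex.toSingle₀Equiv _ _).symm ⟨f, w⟩
  quasiIso := ⟨fun n => by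
    cases n with
    | zero =>
      rw [ChainComplex.quasiIsoAt₀_iff, ShortComplex.quasiIso_iff_of_zeros' _ (C.shape 0 0 (by simp)) rfl rfl]
      constructor
      · refine (ShortComplex.ShortExact.moduleCat_exact_iff_function_exact _).2 ?_
        change Function.Exact (C.d 1 0).hom
          (((ChainComplex.toSingle₀Equiv C X).symm ⟨f, w⟩).f 0).hom
        rw [ChainComplex.toSingle₀Equiv_symm_apply_f_zero]
        exact hf₀
      · change Epi (((ChainComplex.toSingle₀Equiv C X).symm ⟨f, w⟩).f 0)
        rw [ChainComplex.toSingle₀Equiv_symm_apply_f_zero]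
        exact (ModuleCat.epi_iff_surjective _).2 hf
    | succ n =>
      rw [quasiIsoAt_iff_exactAt' (hL := ChainComplex.exactAt_succ_single_obj ..),
        HomologicalComplex.exactAt_iff' _ (n + 2) (n + 1) n (by simp) (by simp)]
      refine (ShortComplex.ShortExact.moduleCat_exact_iff_function_exact _).2 ?_
      exact hC n⟩

/-- The projective resolution attached to an exact sequence `⋯ → F 1 → F 0 → X → 0`. -/
noncomputable def projectiveResolutionOfExact {F : ℕ → Type u} [∀ n, AddCommGroup (F n)]
    [∀ n, Module S (F n)] [∀ n, Module.Projective S (F n)] {X : Type u} [AddCommGroup X]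
    [Module S X] (d : ∀ n, F (n + 1) →ₗ[S] F n) (ε : F 0 →ₗ[S] X)
    (hε : Function.Surjective ε) (hd₀ : Function.Exact (d 0) ε)
    (hd : ∀ n, Function.Exact (d (n + 1)) (d n)) : ProjectiveResolution (ModuleCat.of S X) :=
  haveI (n : ℕ) : Projective ((chainComplexOfLinearMap d fun n =>
      (hd n).apply_apply_eq_zero).X n) :=
    (IsProjective.iff_projective _).1 (inferInstanceAs (Module.Projective S (F n)))
  projectiveResolutionOfAugmented
    (chainComplexOfLinearMap d fun n => (hd n).apply_apply_eq_zero) (ModuleCat.ofHom ε)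
    (by
      rw [chainComplexOfLinearMap_d]
      ext x
      exact hd₀.apply_apply_eq_zero x)
    hε (by rw [chainComplexOfLinearMap_d]; exact hd₀)
    (fun n => by rw [chainComplexOfLinearMap_d, chainComplexOfLinearMap_d]; exact hd n)

lemma nontrivial_iff_not_isZero (M : ModuleCat.{u} S) : Nontrivial M ↔ ¬ IsZero M := by
  rw [ModuleCat.isZero_iff_subsingleton, not_subsingleton_iff_nontrivial]

section
variable {X : ModuleCat.{u} S} (P : ProjectiveResolution X) (N : ModuleCat.{u} S)

lemma ProjectiveResolution.nontrivial_ext_zero_iff :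
    Nontrivial (((Ext S (ModuleCat S) 0).obj (Opposite.op X)).obj N) ↔
    ¬ ∀ g : P.complex.X 0 ⟶ N, P.complex.d 1 0 ≫ g = 0 → g = 0 := by
  rw [nontrivial_iff_not_isZero, (P.isoExt (R := S) 0 N).isZero_iff,
    ← HomologicalComplex.exactAt_iff_isZero_homology,
    HomologicalComplex.exactAt_iff' _ 0 0 1 (by simp) (by simp),
    ShortComplex.moduleCat_exact_iff]
  refine not_congr ⟨fun h g hg => ?_, fun h g hg => ⟨0, ?_⟩⟩
  · obtain ⟨y, hy⟩ := h g hg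
    rw [← hy]
    have : (((P.complex.linearYonedaObj S N).sc' 0 0 1).f) = 0 :=
      (P.complex.linearYonedaObj S N).shape 0 0 (by simp)
    rw [this]
    rfl
  · rw [map_zero]
    exact (h g hg).symm

lemma ProjectiveResolution.nontrivial_ext_succ_iff (n : ℕ) :
    Nontrivial (((Ext S (ModuleCat S) (n + 1)).obj (Opposite.op X)).obj N) ↔
    ¬ ∀ g : P.complex.X (n + 1) ⟶ N, P.complex.d (n + 2) (n + 1) ≫ g = 0 →
      ∃ h : P.complex.X n ⟶ N, P.complex.d (n + 1) n ≫ h = g := by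
  rw [nontrivial_iff_not_isZero, (P.isoExt (R := S) (n + 1) N).isZero_iff,
    ← HomologicalComplex.exactAt_iff_isZero_homology,
    HomologicalComplex.exactAt_iff' _ n (n + 1) (n + 2) (by simp) (by simp),
    ShortComplex.moduleCat_exact_iff]
  rfl
end

section
variable {F : ℕ → Type u} [∀ n, AddCommGroup (F n)]
    [∀ n, Module S (F n)] [∀ n, Module.Projective S (F n)] {X : Type u} [AddCommGroup X]
    [Module S X] (d : ∀ n, F (n + 1) →ₗ[S] F n) (ε : F 0 →ₗ[S] X)
    (hε : Function.Surjective ε) (hd₀ : Function.Exact (d 0) ε)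
    (hd : ∀ n, Function.Exact (d (n + 1)) (d n)) (N : Type u) [AddCommGroup N] [Module S N]
include hε hd₀ hd

lemma nontrivial_ext_zero_iff :
    Nontrivial (((Ext S (ModuleCat S) 0).obj
      (Opposite.op (ModuleCat.of S X))).obj (ModuleCat.of S N)) ↔
    ¬ ∀ g : F 0 →ₗ[S] N, g.comp (d 0) = 0 → g = 0 := by
  rw [ProjectiveResolution.nontrivial_ext_zero_iff (projectiveResolutionOfExact d ε hε hd₀ hd)]
  have e := chainComplexOfLinearMap_d d (fun n => (hd n).apply_apply_eq_zero) 0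
  change ¬ (∀ g : ModuleCat.of S (F 0) ⟶ ModuleCat.of S N,
    (chainComplexOfLinearMap d fun n => (hd n).apply_apply_eq_zero).d 1 0 ≫ g = 0 → g = 0) ↔ _
  rw [e]
  refine not_congr ⟨fun h g hg => ?_, fun h g hg => ?_⟩
  · have := h (ModuleCat.ofHom g) (by ext x; exact LinearMap.congr_fun hg x)
    exact congrArg ModuleCat.Hom.hom this
  · have := h g.hom (congrArg ModuleCat.Hom.hom hg)
    exact ModuleCat.hom_ext this

lemma nontrivial_ext_succ_iff (n : ℕ) :
    Nontrivial (((Ext S (ModuleCat S) (n + 1)).obj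
      (Opposite.op (ModuleCat.of S X))).obj (ModuleCat.of S N)) ↔
    ¬ ∀ g : F (n + 1) →ₗ[S] N, g.comp (d (n + 1)) = 0 → ∃ h : F n →ₗ[S] N, h.comp (d n) = g := by
  rw [ProjectiveResolution.nontrivial_ext_succ_iff (projectiveResolutionOfExact d ε hε hd₀ hd)]
  have e := chainComplexOfLinearMap_d d (fun n => (hd n).apply_apply_eq_zero)
  change ¬ (∀ g : ModuleCat.of S (F (n + 1)) ⟶ ModuleCat.of S N,
    (chainComplexOfLinearMap d fun n => (hd n).apply_apply_eq_zero).d (n + 2) (n + 1) ≫ g = 0 →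
    ∃ h : ModuleCat.of S (F n) ⟶ ModuleCat.of S N,
    (chainComplexOfLinearMap d fun n => (hd n).apply_apply_eq_zero).d (n + 1) n ≫ h = g) ↔ _
  rw [e, e]
  refine not_congr ⟨fun h g hg => ?_, fun h g hg => ?_⟩
  · obtain ⟨y, hy⟩ := h (ModuleCat.ofHom g) (by ext x; exact LinearMap.congr_fun hg x)
    exact ⟨y.hom, congrArg ModuleCat.Hom.hom hy⟩
  · obtain ⟨y, hy⟩ := h g.hom (congrArg ModuleCat.Hom.hom hg)
    exact ⟨ModuleCat.ofHom y, ModuleCat.hom_ext hy⟩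
end

open MonoidalCategory in
lemma exists_projective_resolution_tor (X N : Type u) [AddCommGroup X] [Module S X]
    [AddCommGroup N] [Module S N] :
    ∃ (Q : ℕ → Type u) (_ : ∀ n, AddCommGroup (Q n)) (_ : ∀ n, Module S (Q n))
      (e : ∀ n, Q (n + 1) →ₗ[S] Q n) (ε : Q 0 →ₗ[S] N),
      (∀ n, Module.Projective S (Q n)) ∧ Function.Surjective ε ∧ Function.Exact (e 0) ε ∧
      (∀ n, Function.Exact (e (n + 1)) (e n)) ∧
      (Nontrivial (((Tor (ModuleCat S) 0).obj (ModuleCat.of S X)).obj (ModuleCat.of S N)) ↔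
        ¬ Function.Surjective ((e 0).lTensor X)) ∧
      ∀ n, Nontrivial (((Tor (ModuleCat S) (n + 1)).obj (ModuleCat.of S X)).obj
          (ModuleCat.of S N)) ↔
        ¬ Function.Exact ((e (n + 1)).lTensor X) ((e n).lTensor X) := by
  let P := projectiveResolution (ModuleCat.of S N)
  refine ⟨fun n => P.complex.X n, inferInstance, inferInstance,
    fun n => (P.complex.d (n + 1) n).hom, (P.π.f 0).hom, fun n => ?_, ?_, ?_, ?_, ?_, ?_⟩
  · exact (IsProjective.iff_projective _).2 (P.projective n)
  · exact (ModuleCat.epi_iff_surjective (P.π.f 0)).1 inferInstance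
  · exact (ShortComplex.ShortExact.moduleCat_exact_iff_function_exact _).1 P.exact₀
  · exact fun n => (ShortComplex.ShortExact.moduleCat_exact_iff_function_exact _).1 (P.exact_succ n)
  · rw [nontrivial_iff_not_isZero, Tor_obj, (P.isoLeftDerivedObj _ 0).isZero_iff]
    erw [← HomologicalComplex.exactAt_iff_isZero_homology]
    rw [
      HomologicalComplex.exactAt_iff' _ 1 0 0 (by simp) (by simp),
      ShortComplex.moduleCat_exact_iff]
    refine not_congr ⟨fun h x => h x ?_, fun h x hx => h x⟩
    have h0 : ((((tensoringLeft (ModuleCat S)).obj (ModuleCat.of S X)).mapHomologicalComplex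
      (ComplexShape.down ℕ)).obj P.complex).d 0 0 = 0 := HomologicalComplex.shape _ _ _ (by simp)
    exact LinearMap.congr_fun (congrArg ModuleCat.Hom.hom h0) x
  · intro n
    rw [nontrivial_iff_not_isZero, Tor_obj, (P.isoLeftDerivedObj _ (n + 1)).isZero_iff]
    erw [← HomologicalComplex.exactAt_iff_isZero_homology]
    rw [HomologicalComplex.exactAt_iff' _ (n + 2) (n + 1) n (by simp) (by simp),
      ShortComplex.ShortExact.moduleCat_exact_iff_function_exact]
    rfl
end DerivedFunctors

section Assembly

/-- A complex `G 0 → G 1 → ⋯` of projective modules over a noetherian local ring (the dual of a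
free resolution of the residue field `k`, preceded by zero) which computes both `Ext(k, S)` and
`Tor(k, -)`, and whose cohomology is nonzero and killed by the maximal ideal. -/
lemma exists_dual_resolution (S : Type u) [CommRing S] [IsLocalRing S] [IsNoetherianRing S] :
    ∃ (G : ℕ → Type u) (_ : ∀ n, AddCommGroup (G n)) (_ : ∀ n, Module S (G n))
      (a : ∀ n, G n →ₗ[S] G (n + 1)), (∀ n, Module.Projective S (G n)) ∧ Subsingleton (G 0) ∧
      (∀ n, (a (n + 1)).comp (a n) = 0) ∧
      (∀ n, Nontrivial (((Ext S (ModuleCat S) n).obj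
        (Opposite.op (ModuleCat.of S (IsLocalRing.ResidueField S)))).obj (ModuleCat.of S S)) ↔
        ¬ Function.Exact (a n) (a (n + 1))) ∧
      (∀ n (N : Type u) [AddCommGroup N] [Module S N],
        Nontrivial (((Tor (ModuleCat S) n).obj
          (ModuleCat.of S (IsLocalRing.ResidueField S))).obj (ModuleCat.of S N)) ↔
        ¬ HomExact a n N) ∧
      (∀ n (g : G (n + 1)), a (n + 1) g = 0 → ∀ x ∈ IsLocalRing.maximalIdeal S,
        x • g ∈ LinearMap.range (a n)) ∧
      ∃ n, ¬ Function.Exact (a n) (a (n + 1)) := by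
  obtain ⟨F, _, _, d, ε, _, _, _, hε, hd₀, hd⟩ :=
    exists_free_resolution S (IsLocalRing.ResidueField S)
  have hdd := comp_eq_zero_of_resolution d hd
  have hk (x : S) (hx : x ∈ IsLocalRing.maximalIdeal S) (y : IsLocalRing.ResidueField S) :
      x • y = 0 := by
    rw [Algebra.smul_def, IsLocalRing.ResidueField.algebraMap_eq,
      (IsLocalRing.residue_eq_zero_iff x).2 hx, zero_mul]
  refine ⟨fun n => Module.Dual S (F n), inferInstance, inferInstance,
    fun n => (d n).dualMap, fun n => inferInstance, ?_, fun n => ?_, fun n => ?_, ?_, ?_, ?_⟩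
  · exact ⟨fun f g => LinearMap.ext fun x => by rw [Subsingleton.elim x 0, map_zero, map_zero]⟩
  · exact LinearMap.ext fun g => LinearMap.ext fun x =>
      (congrArg g (LinearMap.congr_fun (hdd n) x)).trans (map_zero g)
  · rw [← coHomExact_self_iff d hdd]
    cases n with
    | zero =>
      rw [nontrivial_ext_zero_iff (F := fun n => F (n + 1)) (fun n => d (n + 1)) ε hε hd₀ hd S]
      refine not_congr (forall_congr' fun g => forall_congr' fun _ => ?_)
      refine ⟨fun h => ⟨0, h ▸ LinearMap.zero_comp _⟩, fun ⟨h, hh⟩ => ?_⟩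
      rw [← hh]
      ext y
      rw [LinearMap.comp_apply, Subsingleton.elim (d 0 _) 0, map_zero]
      rfl
    | succ n => exact nontrivial_ext_succ_iff (F := fun n => F (n + 1)) (fun n => d (n + 1)) ε hε hd₀ hd S n
  · intro n N _ _
    have : HomExact (fun n => (d n).dualMap) n N ↔ TensorExact d n N := by
      rw [homExact_dualMap_iff, TensorExact, LinearMap.exact_iff]
      refine ⟨fun h => le_antisymm h ?_, fun h => h.le⟩
      rw [LinearMap.range_le_ker_iff, ← LinearMap.rTensor_comp, hdd, LinearMap.rTensor_zero]
    rw [this]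
    obtain ⟨Q, _, _, e, η, _, hη, he₀, he, h₀, h₁⟩ :=
      exists_projective_resolution_tor (S := S) (IsLocalRing.ResidueField S) N
    cases n with
    | zero =>
      rw [h₀, tensorExact_zero_iff d (N := N) hε hd₀, subsingleton_tensor_iff_surjective hη he₀]
    | succ n => rw [h₁, tensorExact_succ_iff_exact d hd hε hd₀ n e η hη he₀ he]
  · intro n g hg x hx
    exact smul_mem_range_dualMap d hd hd₀ (hk x hx) n hg
  · obtain ⟨n, hn⟩ := exists_not_coHomExact d hd hε hd₀
    exact ⟨n, fun h => hn ((coHomExact_self_iff d hdd n).2 h)⟩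

section Local

variable {S : Type u} [CommRing S] [IsLocalRing S] [IsNoetherianRing S] {J : ℤ → Type u}
  [∀ j, AddCommGroup (J j)] [∀ j, Module S (J j)] [∀ j, Module.Injective S (J j)]
  (e : ∀ j : ℤ, J (j + 1) →ₗ[S] J j) (he : ∀ j, Function.Exact (e (j + 1)) (e j))
  {M : Type u} [AddCommGroup M] [Module S M] {j : ℤ} {φ : J (j + 1) →ₗ[S] M}
  (hφ : Function.Surjective φ) (heφ : Function.Exact (e (j + 1)) φ)
include he hφ heφ

lemma moduleDepth_le_moduleWidth : moduleDepth S S ≤ moduleWidth S M := by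
  obtain ⟨G, _, _, a, _, _, ha, hExt, hTor, -, -⟩ := exists_dual_resolution S
  refine le_sInf ?_
  rintro _ ⟨n, rfl, hn⟩
  rw [hTor] at hn
  have hker : LinearMap.ker φ = LinearMap.ker (e j) := by
    rw [LinearMap.exact_iff.1 heφ, LinearMap.exact_iff.1 (he j)]
  have : ∃ i ≤ n, ¬ Function.Exact (a i) (a (i + 1)) := by
    by_contra! hx
    refine hn (homExact_of_surjective a ha hφ n (hx n le_rfl) fun m hm => ?_)
    rw [hker]
    exact homExact_ker_of_injective_of_exact a ha e he m (fun i hi => hx i (by omega)) j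
  obtain ⟨i, hi, hx⟩ := this
  have hle : moduleDepth S S ≤ i := sInf_le ⟨i, rfl, (hExt i).2 hx⟩
  exact hle.trans (by exact_mod_cast hi)

lemma moduleDepth_sub_moduleWidth_eq_zero {c : J (j + 1)}
    (hc : ∀ x ∈ IsLocalRing.maximalIdeal S, x • c = 0)
    (hc' : ¬ ∃ y, (∀ x ∈ IsLocalRing.maximalIdeal S, x • y = 0) ∧ e (j + 1) y = c) :
    moduleDepth S S - moduleWidth S M = 0 := by
  have hle := moduleDepth_le_moduleWidth e he hφ heφ
  obtain ⟨G, _, _, a, _, _, ha, hExt, hTor, hm, hex⟩ := exists_dual_resolution S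
  classical
  obtain ⟨n, hn, hmin⟩ : ∃ n, ¬ Function.Exact (a n) (a (n + 1)) ∧
      ∀ i < n, Function.Exact (a i) (a (i + 1)) :=
    ⟨Nat.find hex, Nat.find_spec hex, fun i hi => not_not.1 (Nat.find_min hex hi)⟩
  have hdepth : moduleDepth S S = n := by
    refine le_antisymm (sInf_le ⟨n, rfl, (hExt n).2 hn⟩) (le_sInf ?_)
    rintro _ ⟨i, rfl, hi⟩
    have : n ≤ i := not_lt.1 fun h => (hExt i).1 hi (hmin i h)
    exact_mod_cast this
  have hwidth : moduleWidth S M ≤ n := by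
    refine sInf_le ⟨n, rfl, (hTor n M).2 fun hM => hc' ?_⟩
    obtain ⟨g₀, hg₀, hg₁⟩ : ∃ g₀, a (n + 1) g₀ = 0 ∧ g₀ ∉ LinearMap.range (a n) := by
      by_contra! h
      refine hn fun g => ⟨h g, ?_⟩
      rintro ⟨y, rfl⟩
      exact LinearMap.congr_fun (ha n) y
    refine exists_lift_socle a ha hφ heφ n (fun m hm => ?_) hM (IsLocalRing.maximalIdeal S)
      hg₀ hg₁ (hm n g₀ hg₀) hc
    exact homExact_ker_of_injective_of_exact a ha e he m (fun i hi => hmin i (by omega)) (j + 1)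
  rw [hdepth] at hle ⊢
  rw [le_antisymm hwidth hle]
  exact EReal.sub_self (EReal.natCast_ne_top n) (EReal.natCast_ne_bot n)

end Local

lemma exists_mk_eq_of_forall_smul_eq_zero {R : Type u} [CommRing R] {T : Submonoid R}
    {I : Type u} [AddCommGroup I] [Module R I] (P : Ideal R) (hP : P.FG) (y : LocalizedModule T I)
    (hy : ∀ x ∈ P, x • y = 0) :
    ∃ (y₀ : I) (t : T), LocalizedModule.mk y₀ t = y ∧ ∀ x ∈ P, x • y₀ = 0 := by
  induction y using LocalizedModule.induction_on with
  | _ y₀ t =>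
  have : Module.Finite R P := Module.Finite.iff_fg.2 hP
  obtain ⟨s, hs⟩ := Module.Finite.exists_smul_of_comp_eq_of_isLocalizedModule T
    (LocalizedModule.mkLinearMap T I) ((LinearMap.toSpanSingleton R I y₀).comp P.subtype) 0 (by
      ext x
      have h₁ := hy x x.2
      have h₂ := LocalizedModule.smul'_mk (t : R) ((x : R) • y₀) t
      rw [LocalizedModule.smul'_mk] at h₁
      rw [h₁, smul_zero] at h₂
      rw [LinearMap.comp_zero]
      exact (LocalizedModule.mk_cancel t ((x : R) • y₀)).symm.trans h₂.symm)
  refine ⟨s • y₀, s * t, LocalizedModule.mk_cancel_common_left s t y₀, fun x hx => ?_⟩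
  have := LinearMap.congr_fun hs ⟨x, hx⟩
  rw [smul_comm]
  simpa using this

lemma exists_lift_of_localized_lift {R : Type u} [CommRing R] [IsNoetherianRing R] (p : Ideal R)
    [p.IsPrime] {I I' : Type u} [AddCommGroup I] [Module R I] [AddCommGroup I'] [Module R I']
    (ψ : I' →ₗ[R] I) (c : I)
    (h : ∃ y, (∀ x ∈ IsLocalRing.maximalIdeal (Localization.AtPrime p), x • y = 0) ∧
      LocalizedModule.map p.primeCompl ψ y = LocalizedModule.mk c 1) :
    ∃ y : I', (∀ x ∈ p, x • y = 0) ∧ ∃ s ∉ p, ψ y = s • c := by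
  obtain ⟨y, hy, hyc⟩ := h
  obtain ⟨y₀, t, rfl, h₀⟩ := exists_mk_eq_of_forall_smul_eq_zero p (IsNoetherian.noetherian p) y
    (fun x hx => by
      rw [← hy (algebraMap R _ x) ((IsLocalization.AtPrime.to_map_mem_maximal_iff
        (Localization.AtPrime p) p x).2 hx), algebraMap_smul])
  rw [LocalizedModule.map_mk, LocalizedModule.mk_eq] at hyc
  obtain ⟨u, hu⟩ := hyc
  refine ⟨(u : R) • y₀, fun x hx => by rw [smul_comm, h₀ x hx, smul_zero], (u * t : R),
    (u * t : p.primeCompl).2, ?_⟩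
  rw [map_smul, mul_smul]
  simpa [Submonoid.smul_def] using hu

end Assembly

/-- Let `R` be a commutative noetherian ring and `M` a nonzero Gorenstein injective
`R`-module.  Then `sup { depth R_p − width_{R_p} M_p | p ∈ Spec R } = 0`. -/
theorem sup_depth_sub_width_eq_zero_of_gorensteinInjective
    (R : Type u) [CommRing R] [IsNoetherianRing R]
    (M : Type u) [AddCommGroup M] [Module R M] [Nontrivial M]
    (hM : IsGorensteinInjective R M) :
    (⨆ p : PrimeSpectrum R,
        moduleDepth (Localization.AtPrime p.asIdeal) (Localization.AtPrime p.asIdeal) -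
          moduleWidth (Localization.AtPrime p.asIdeal)
            (LocalizedModule p.asIdeal.primeCompl M)) = 0 := by
  obtain ⟨I, _, _, d, hI, hd, -, ⟨E⟩⟩ := hM
  obtain ⟨η, hη, hdη, -⟩ := exists_surjective_onto_ker (hd (-1)) (hd (-1 + 1))
  let φ : I (-1 + 1 + 1) →ₗ[R] M := E.symm.toLinearMap.comp η
  have hφ : Function.Surjective φ := E.symm.surjective.comp hη
  have hdφ : Function.Exact (d (-1 + 1 + 1)) φ := fun x => by
    rw [← hdη x]
    exact E.symm.map_eq_zero_iff
  have hinj (p : PrimeSpectrum R) (j : ℤ) : Module.Injective (Localization.AtPrime p.asIdeal)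
      (LocalizedModule p.asIdeal.primeCompl (I j)) :=
    haveI := hI j
    Module.injective_of_isLocalizedModule p.asIdeal.primeCompl
      (LocalizedModule.mkLinearMap p.asIdeal.primeCompl (I j))
  have hloc (p : PrimeSpectrum R) (j : ℤ) := LocalizedModule.map_exact p.asIdeal.primeCompl _ _
    (hd j)
  refine le_antisymm (iSup_le fun p => EReal.sub_nonpos.2 ?_) ?_
  · exact moduleDepth_le_moduleWidth
      (J := fun j => LocalizedModule p.asIdeal.primeCompl (I j))
      (fun j => LocalizedModule.map p.asIdeal.primeCompl (d j)) (hloc p) (j := -1 + 1)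
      (φ := LocalizedModule.map p.asIdeal.primeCompl φ)
      (LocalizedModule.map_surjective _ _ hφ) (LocalizedModule.map_exact _ _ _ hdφ)
  · have hns : ¬ Function.Surjective (d (-1 + 1 + 1)) := by
      intro h
      obtain ⟨m, hm⟩ := exists_ne (0 : M)
      obtain ⟨x, rfl⟩ := hφ m
      exact hm ((hdφ x).2 (h x))
    have hI' := hI (-1 + 1 + 1 + 1)
    obtain ⟨p, c, hc, hp⟩ : ∃ (p : PrimeSpectrum R) (c : I (-1 + 1 + 1)),
        (∀ x, x ∈ p.asIdeal ↔ x • c = 0) ∧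
        ¬ ∃ y, (∀ x ∈ p.asIdeal, x • y = 0) ∧ ∃ s ∉ p.asIdeal, d (-1 + 1 + 1) y = s • c := by
      by_contra! h
      exact hns (surjective_of_forall_prime _ fun p c hc => by
        by_contra! h'
        obtain ⟨y, hy, s, hs, hys⟩ := h p c hc
        exact h' y hy s hs hys)
    refine le_iSup_of_le p (le_of_eq (Eq.symm ?_))
    refine moduleDepth_sub_moduleWidth_eq_zero
      (J := fun j => LocalizedModule p.asIdeal.primeCompl (I j))
      (fun j => LocalizedModule.map p.asIdeal.primeCompl (d j)) (hloc p) (j := -1 + 1)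
      (φ := LocalizedModule.map p.asIdeal.primeCompl φ)
      (LocalizedModule.map_surjective _ _ hφ) (LocalizedModule.map_exact _ _ _ hdφ)
      (c := LocalizedModule.mk c 1) (fun x hx => ?_)
      (fun h => hp (exists_lift_of_localized_lift p.asIdeal _ c h))
    have hle : IsLocalRing.maximalIdeal (Localization.AtPrime p.asIdeal) ≤
        LinearMap.ker (LinearMap.toSpanSingleton (Localization.AtPrime p.asIdeal)
          (LocalizedModule p.asIdeal.primeCompl (I (-1 + 1 + 1))) (LocalizedModule.mk c 1)) := by
      rw [← Localization.AtPrime.map_eq_maximalIdeal, Ideal.map, Ideal.span_le]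
      rintro _ ⟨x, hx, rfl⟩
      change algebraMap R (Localization.AtPrime p.asIdeal) x • (LocalizedModule.mk c 1 :
        LocalizedModule p.asIdeal.primeCompl (I (-1 + 1 + 1))) = 0
      rw [algebraMap_smul, LocalizedModule.smul'_mk, (hc x).1 hx, LocalizedModule.zero_mk]
    exact hle hx
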